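/- For every real ρ > 0 and every integer M ≥ 1: ∑_{x=0}^{M−1} x·ρ^x/(1+ρ)^{x+1} + M·ρ^M/(1+ρ)^M = ρ·( 1 − (ρ/(1+ρ))^M ). Equivalently, the mean of the steady-state distribution Π (with Π(x) = ρ^x/(1+ρ)^{x+1} for x < M and Π(M) = ρ^M/(1+ρ)^M) equals ρ·(1 − (ρ/(1+ρ))^M). -/

import Mathlib

/-!
Write `q = ρ/(1+ρ)`. The proof is by induction on the truncation level `M`: going from `n` to
`n + 1`, the left side grows by `q^(n+1)` (the probability of exceeding `n`, as in the tail-sum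
formula for the mean), and since `1 - q = 1/(1+ρ)`, the right side grows by
`ρ q^n (1 - q) = q^(n+1)` as well.
-/

open scoped BigOperators

/-- For every real `ρ > 0` and integer `M ≥ 1`, the mean of the
steady-state distribution of the lumped single-student chain equals
`ρ·(1 − (ρ/(1+ρ))^M)`. -/
theorem steady_state_mean (rho : ℝ) (hrho : 0 < rho) (M : ℕ) (hM : 1 ≤ M) :
    ∑ x ∈ Finset.range M, (x : ℝ) * rho ^ x / (1 + rho) ^ (x + 1)
        + (M : ℝ) * rho ^ M / (1 + rho) ^ M
      = rho * (1 - (rho / (1 + rho)) ^ M) := by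
  have h : 1 + rho ≠ 0 := by positivity
  -- The identity also holds for `M = 0`, which serves as the base case.
  clear hM
  induction M with
  | zero => simp
  | succ n ih =>
    -- Raising the truncation level from `n` to `n + 1` adds `(ρ/(1+ρ))^(n+1)` to the mean.
    have step : (n : ℝ) * rho ^ n / (1 + rho) ^ (n + 1)
        + ((n + 1 : ℕ) : ℝ) * rho ^ (n + 1) / (1 + rho) ^ (n + 1)
        = (n : ℝ) * rho ^ n / (1 + rho) ^ n + (rho / (1 + rho)) ^ (n + 1) := by
      rw [div_pow]
      push_cast
      field_simp
      ring
    have geom : (rho / (1 + rho)) ^ (n + 1)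
        = rho * (rho / (1 + rho)) ^ n - rho * (rho / (1 + rho)) ^ (n + 1) := by
      rw [pow_succ]
      field_simp
      ring
    rw [Finset.sum_range_succ]
    linarith
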